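/- Let σ ∈ (1,2), c > 0, and Φ_c the complex endpoint soliton of gDNLS with M(Φ_c) = (1/2)‖Φ_c‖², P(Φ_c) = (1/2)Im∫Φ_c∂ₓΦ̄_c dx, and ‖∂ₓΦ_c‖² = (c²/4)‖Φ_c‖². Then the determinant -‖Φ_c‖²_{L²}‖∂ₓΦ_c‖²_{L²} + 4P(Φ_c)² = -σ(2-σ)c² M(Φ_c)², which is nonzero. -/

import Mathlib

open MeasureTheory Complex

noncomputable def phi (σ c x : ℝ) : ℝ :=
  (2*c*(σ+1) / (σ^2 * (c*x)^2 + 1)) ^ (1/(2*σ))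

noncomputable def Phi (σ c : ℝ) (x : ℝ) : ℂ :=
  (phi σ c x : ℂ) *
    Complex.exp (Complex.I * ((c/2) * x : ℝ)
      - (Complex.I / (2*σ + 2)) * ((∫ y in Set.Iio x, (phi σ c y) ^ (2*σ) : ℝ) : ℂ))

noncomputable def Mass (σ c : ℝ) : ℝ := (1/2) * ∫ x : ℝ, ‖Phi σ c x‖^2

noncomputable def Mom (σ c : ℝ) : ℝ :=
  (1/2) * (∫ x : ℝ, Phi σ c x * (starRingEnd ℂ) (deriv (Phi σ c) x)).im

noncomputable def DD (σ c x : ℝ) : ℝ := σ^2 * (c*x)^2 + 1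

lemma DD_pos (σ c x : ℝ) : 0 < DD σ c x := by unfold DD; positivity

lemma DD_cont (σ c : ℝ) : Continuous (DD σ c) := by unfold DD; fun_prop

lemma DD_deriv (σ c x : ℝ) : HasDerivAt (DD σ c) (2*σ^2*c^2*x) x := by
  have h := ((((hasDerivAt_id x).const_mul c).pow 2).const_mul (σ^2)).add_const 1
  refine h.congr_deriv ?_
  simp; ring

lemma DD_int (σ c a : ℝ) (hσ : 0 < σ) (hc : 0 < c) (ha : 1/2 < a) :
    Integrable (fun x => (DD σ c x) ^ (-a)) := by
  have h := integrable_rpow_neg_one_add_norm_sq (E := ℝ) (μ := volume) (r := 2*a)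
    (by simp; linarith)
  have h2 := h.comp_mul_left' (R := σ*c) (by positivity)
  refine h2.congr (Filter.Eventually.of_forall fun x => ?_)
  simp only [DD, Real.norm_eq_abs, sq_abs]
  congr 1 <;> ring

lemma DD_atTop (σ c : ℝ) (hσ : 0 < σ) (hc : 0 < c) :
    Filter.Tendsto (DD σ c) (Filter.cocompact ℝ) Filter.atTop := by
  have h1 : Filter.Tendsto (fun x : ℝ => ‖x‖^2) (Filter.cocompact ℝ) Filter.atTop :=
    (Filter.tendsto_pow_atTop (by norm_num)).comp (tendsto_norm_cocompact_atTop)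
  have h2 := (h1.const_mul_atTop (r := σ^2*c^2) (by positivity)).atTop_add
    (tendsto_const_nhds (x := (1:ℝ)))
  refine h2.congr fun x => ?_
  simp [DD]; ring

lemma bdry (σ c a : ℝ) (hσ : 0 < σ) (hc : 0 < c) (ha : 1/2 < a) :
    Filter.Tendsto (fun x => x * (DD σ c x) ^ (-a)) (Filter.cocompact ℝ) (nhds 0) := by
  have h1 := ((tendsto_rpow_neg_atTop (y := a - 1/2) (by linarith)).comp
    (DD_atTop σ c hσ hc)).const_mul (1/(σ*c))
  rw [mul_zero] at h1
  refine squeeze_zero_norm (fun x => ?_) h1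
  have hD := DD_pos σ c x
  have e : (DD σ c x) ^ (-(a-1/2)) = (DD σ c x)^(-a) * √(DD σ c x) := by
    rw [Real.sqrt_eq_rpow, ← Real.rpow_add hD]; congr 1; ring
  have hs : σ*c*|x| ≤ √(DD σ c x) := by
    apply Real.le_sqrt_of_sq_le
    unfold DD
    rw [mul_pow, sq_abs]; nlinarith
  have hp : 0 < (DD σ c x)^(-a) := Real.rpow_pos_of_pos hD _
  simp only [Function.comp]
  rw [e, norm_mul, Real.norm_eq_abs, Real.norm_eq_abs, abs_of_pos hp,
    one_div_mul_eq_div, le_div_iff₀ (by positivity)]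
  nlinarith

lemma key (σ c a : ℝ) (hσ : 0 < σ) (hc : 0 < c) (ha : 1/2 < a) :
    (1-2*a) * (∫ x, (DD σ c x) ^ (-a)) + 2*a*(∫ x, (DD σ c x) ^ (-(a+1))) = 0 := by
  have hi1 := DD_int σ c a hσ hc ha
  have hi2 := DD_int σ c (a+1) hσ hc (by linarith)
  have hd : ∀ x, HasDerivAt (fun x => x * (DD σ c x) ^ (-a))
      ((1-2*a) * (DD σ c x) ^ (-a) + 2*a* (DD σ c x) ^ (-(a+1))) x := by
    intro x
    have hD := DD_pos σ c x
    have h := (hasDerivAt_id x).mul ((DD_deriv σ c x).rpow_const (p := -a) (Or.inl hD.ne'))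
    refine h.congr_deriv ?_
    have e : (DD σ c x) ^ (-a) = (DD σ c x) ^ (-(a+1)) * DD σ c x := by
      rw [← Real.rpow_add_one hD.ne']; congr 1; ring
    have e2 : -a - 1 = -(a+1) := by ring
    rw [e2, e]
    simp only [id]
    have : DD σ c x = σ^2 * (c*x)^2 + 1 := rfl
    generalize (DD σ c x) ^ (-(a+1)) = w
    rw [this]; ring
  have hb := bdry σ c a hσ hc ha
  rw [cocompact_eq_atBot_atTop] at hb
  have := integral_of_hasDerivAt_of_tendsto hd ((hi1.const_mul _).add (hi2.const_mul _))
    (hb.mono_left le_sup_left) (hb.mono_left le_sup_right)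
  rw [integral_add (hi1.const_mul _) (hi2.const_mul _), integral_const_mul,
    integral_const_mul] at this
  simpa using this

lemma phi_pos (σ c x : ℝ) (hσ : 0 < σ) (hc : 0 < c) : 0 < phi σ c x := by
  unfold phi; positivity

lemma phi_2s (σ c x : ℝ) (hσ : 0 < σ) (hc : 0 < c) :
    (phi σ c x)^(2*σ) = 2*c*(σ+1) / DD σ c x := by
  have hD := DD_pos σ c x
  unfold phi
  change ((2*c*(σ+1) / DD σ c x)^(1/(2*σ)))^(2*σ) = _
  rw [← Real.rpow_mul (by positivity), one_div_mul_cancel (by positivity), Real.rpow_one]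

lemma phi_sq (σ c x : ℝ) (hσ : 0 < σ) (hc : 0 < c) :
    (phi σ c x)^2 = (2*c*(σ+1))^(1/σ) * (DD σ c x)^(-(1/σ)) := by
  have hD := DD_pos σ c x
  unfold phi
  change ((2*c*(σ+1) / DD σ c x)^(1/(2*σ)))^2 = _
  rw [← Real.rpow_natCast, ← Real.rpow_mul (by positivity), Real.rpow_neg hD.le,
    ← div_eq_mul_inv, ← Real.div_rpow (by positivity) hD.le]
  congr 1; push_cast; field_simp

lemma phi_deriv (σ c x : ℝ) (hσ : 0 < σ) (hc : 0 < c) :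
    HasDerivAt (phi σ c) (phi σ c x * (-(σ*c^2*x) / DD σ c x)) x := by
  have hD := DD_pos σ c x
  have hq : 0 < 2*c*(σ+1) / DD σ c x := by positivity
  have h := ((hasDerivAt_const x (2*c*(σ+1))).div (DD_deriv σ c x) hD.ne').rpow_const
    (p := 1/(2*σ)) (Or.inl hq.ne')
  refine h.congr_deriv ?_
  have : phi σ c x = (2*c*(σ+1) / DD σ c x)^(1/(2*σ)) := rfl
  simp only [Pi.div_apply]
  rw [this, Real.rpow_sub_one hq.ne']
  generalize (2*c*(σ+1) / DD σ c x)^(1/(2*σ)) = w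
  field_simp
  ring

noncomputable def FF (σ c x : ℝ) : ℝ := ∫ y in Set.Iio x, (phi σ c y) ^ (2*σ)

lemma FF_deriv (σ c x : ℝ) (hσ : 0 < σ) (hc : 0 < c) :
    HasDerivAt (FF σ c) (2*c*(σ+1) / DD σ c x) x := by
  have hg : Integrable (fun y => 2*c*(σ+1) / DD σ c y) := by
    refine ((DD_int σ c 1 hσ hc (by norm_num)).const_mul (2*c*(σ+1))).congr
      (Filter.Eventually.of_forall fun y => ?_)
    simp [Real.rpow_neg_one, div_eq_mul_inv]
  have hcont : Continuous (fun y => 2*c*(σ+1) / DD σ c y) :=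
    continuous_const.div (DD_cont σ c) fun y => (DD_pos σ c y).ne'
  have e : FF σ c = fun x => (∫ y in (0:ℝ)..x, 2*c*(σ+1) / DD σ c y)
      + ∫ y in Set.Iic 0, 2*c*(σ+1) / DD σ c y := by
    funext x
    unfold FF
    simp only [phi_2s σ c _ hσ hc]
    rw [setIntegral_congr_set Iio_ae_eq_Iic,
      ← intervalIntegral.integral_Iic_sub_Iic hg.integrableOn hg.integrableOn]
    ring
  rw [e]
  exact (intervalIntegral.integral_hasDerivAt_right (hcont.intervalIntegrable _ _)
    hcont.aestronglyMeasurable.stronglyMeasurableAtFilter hcont.continuousAt).add_const _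

noncomputable def th (σ c x : ℝ) : ℝ := c/2*x - FF σ c x / (2*σ+2)

lemma Phi_eq (σ c : ℝ) : Phi σ c = fun x => (phi σ c x : ℂ) * cexp ((th σ c x : ℝ) * I) := by
  funext x
  unfold Phi th
  rw [show (∫ y in Set.Iio x, (phi σ c y) ^ (2*σ)) = FF σ c x from rfl]
  congr 2
  push_cast
  ring

lemma Phi_norm (σ c x : ℝ) (hσ : 0 < σ) (hc : 0 < c) : ‖Phi σ c x‖ = phi σ c x := by
  rw [Phi_eq]
  simp [Complex.norm_exp_ofReal_mul_I, abs_of_pos (phi_pos σ c x hσ hc)]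

lemma Phi_deriv (σ c x : ℝ) (hσ : 0 < σ) (hc : 0 < c) :
    HasDerivAt (Phi σ c) (Phi σ c x *
      (((-(σ*c^2*x) / DD σ c x : ℝ) : ℂ) + ((c/2 - c / DD σ c x : ℝ) : ℂ) * I)) x := by
  have hD := DD_pos σ c x
  have ht : HasDerivAt (th σ c) (c/2 - c / DD σ c x) x := by
    have h := ((hasDerivAt_id x).const_mul (c/2)).sub ((FF_deriv σ c x hσ hc).div_const (2*σ+2))
    refine h.congr_deriv ?_
    field_simp
  have h := (phi_deriv σ c x hσ hc).ofReal_comp.mul ((ht.ofReal_comp.mul_const I).cexp)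
  rw [Phi_eq]
  refine h.congr_deriv ?_
  push_cast
  ring

lemma Phi_deriv_norm (σ c x : ℝ) (hσ : 0 < σ) (hc : 0 < c) :
    ‖deriv (Phi σ c) x‖^2 = c^2/4 * ‖Phi σ c x‖^2 := by
  have hD := DD_pos σ c x
  rw [(Phi_deriv σ c x hσ hc).deriv, norm_mul, mul_pow, Complex.sq_norm (_ + _),
    Complex.normSq_add_mul_I]
  rw [mul_comm]
  congr 1
  have : DD σ c x = σ^2 * (c*x)^2 + 1 := rfl
  field_simp
  rw [this]; ring

lemma prod_eq (σ c x : ℝ) (hσ : 0 < σ) (hc : 0 < c) :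
    Phi σ c x * (starRingEnd ℂ) (deriv (Phi σ c) x) =
      (((phi σ c x)^2 * (-(σ*c^2*x) / DD σ c x) : ℝ) : ℂ)
        + (((phi σ c x)^2 * (c / DD σ c x - c/2) : ℝ) : ℂ) * I := by
  rw [(Phi_deriv σ c x hσ hc).deriv, map_mul, ← mul_assoc, Complex.mul_conj, 
    Complex.normSq_eq_norm_sq, Phi_norm σ c x hσ hc]
  simp only [map_add, map_mul, Complex.conj_ofReal, Complex.conj_I]
  push_cast
  ring

theorem stmt18 (σ c : ℝ) (hσ : σ ∈ Set.Ioo (1:ℝ) 2) (hc : 0 < c) :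
    (-(∫ x : ℝ, ‖Phi σ c x‖^2) * (∫ x : ℝ, ‖deriv (Phi σ c) x‖^2) + 4 * (Mom σ c)^2
        = -(σ * (2 - σ) * c^2 * (Mass σ c)^2))
      ∧ -(σ * (2 - σ) * c^2 * (Mass σ c)^2) ≠ 0 := by
  obtain ⟨h1, h2⟩ := hσ
  have h0 : 0 < σ := by linarith
  have ha : 1/2 < 1/σ := one_div_lt_one_div_of_lt h0 h2
  have hi1 := DD_int σ c (1/σ) h0 hc ha
  have hi2 := DD_int σ c (1/σ+1) h0 hc (by linarith)
  have hk := key σ c (1/σ) h0 hc ha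
  set J := ∫ x, (DD σ c x) ^ (-(1/σ)) with hJ
  set K := ∫ x, (DD σ c x) ^ (-(1/σ+1)) with hK
  set B := (2*c*(σ+1))^(1/σ) with hB
  have hBpos : 0 < B := Real.rpow_pos_of_pos (by positivity) _
  have hJpos : 0 < J := by
    rw [hJ, integral_pos_iff_support_of_nonneg
      (fun x => (Real.rpow_pos_of_pos (DD_pos σ c x) _).le) hi1]
    have : Function.support (fun x => (DD σ c x) ^ (-(1/σ))) = Set.univ := by
      ext x; simpa using (Real.rpow_pos_of_pos (DD_pos σ c x) _).ne'
    rw [this]; simp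
  have hN : ∫ x : ℝ, ‖Phi σ c x‖^2 = B * J := by
    simp only [Phi_norm σ c _ h0 hc, phi_sq σ c _ h0 hc]
    rw [integral_const_mul]
  have hNd : ∫ x : ℝ, ‖deriv (Phi σ c) x‖^2 = c^2/4 * (B * J) := by
    simp only [Phi_deriv_norm σ c _ h0 hc]
    rw [integral_const_mul, hN]
  have hφi : Integrable (fun x => (phi σ c x)^2) := by
    simp only [phi_sq σ c _ h0 hc]; exact hi1.const_mul _
  have hφc : Continuous (phi σ c) :=
    continuous_iff_continuousAt.2 fun x => (phi_deriv σ c x h0 hc).continuousAt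
  have hint : Integrable (fun x => Phi σ c x * (starRingEnd ℂ) (deriv (Phi σ c) x)) := by
    refine (hφi.const_mul (c/2)).mono' ?_ (Filter.Eventually.of_forall fun x => ?_)
    · simp only [prod_eq σ c _ h0 hc]
      have hDc := DD_cont σ c
      have hne : ∀ x, DD σ c x ≠ 0 := fun x => (DD_pos σ c x).ne'
      apply Continuous.aestronglyMeasurable
      fun_prop (disch := exact hne _)
    · have h := Phi_deriv_norm σ c x h0 hc
      rw [← Phi_norm σ c x h0 hc, norm_mul, RCLike.norm_conj]
      have : ‖deriv (Phi σ c) x‖ = c/2 * ‖Phi σ c x‖ := by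
        rw [← sq_eq_sq₀ (norm_nonneg _) (by positivity), h]; ring
      rw [this]; apply le_of_eq; ring
  have hM : Mom σ c = (1/2) * (c * (B*K) - c/2 * (B*J)) := by
    unfold Mom
    congr 1
    have := integral_im hint
    change _ = (∫ x : ℝ, Phi σ c x * (starRingEnd ℂ) (deriv (Phi σ c) x)).im at this
    rw [← this]
    have e : ∀ x, RCLike.im (Phi σ c x * (starRingEnd ℂ) (deriv (Phi σ c) x)) =
        c * (B * (DD σ c x) ^ (-(1/σ+1))) - c/2 * (B * (DD σ c x) ^ (-(1/σ))) := by
      intro x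
      have hD := DD_pos σ c x
      have e2 : (DD σ c x) ^ (-(1/σ+1)) = (DD σ c x) ^ (-(1/σ)) / DD σ c x := by
        rw [← Real.rpow_sub_one hD.ne']; congr 1; ring
      rw [prod_eq σ c x h0 hc, e2, phi_sq σ c x h0 hc]
      rw [RCLike.im_eq_complex_im]
      rw [Complex.add_im, Complex.ofReal_im, Complex.im_ofReal_mul, Complex.I_im]
      ring
    simp only [e]
    rw [integral_sub ((hi2.const_mul _).const_mul _) ((hi1.const_mul _).const_mul _)]
    simp only [integral_const_mul]
    rfl
  have hKJ : K = (1-σ/2)*J := by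
    field_simp at hk
    linarith
  have hMass : Mass σ c = 1/2 * (B*J) := by unfold Mass; rw [hN]
  refine ⟨?_, ?_⟩
  · rw [hN, hNd, hM, hMass, hKJ]; ring
  · rw [hMass]
    have : 0 < 2 - σ := by linarith
    exact neg_ne_zero.2 (by positivity)
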